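/- Let n ≥ 2, α ∈ (0,1) and 1 < p < n/α. Then for every u ∈ C_c^∞(ℝⁿ) with u not identically zero, the fractional Hardy inequality is strict: ∫_{ℝⁿ}∫_{ℝⁿ} |u(x)−u(y)|^p / |x−y|^{n+pα} dx dy > C_{n,α,p} ∫_{ℝⁿ} |u(x)|^p / |x|^{pα} dx. -/

import Mathlib

/-!
The proof is the ground state argument for fractional Hardy inequalities. Put `a = p α`,
`γ = (n - a) / p` and `ω(x) = ‖x‖ ^ (-γ)`, the virtual ground state. Convexity of `t ↦ t ^ p` on
`[0, ∞)` gives, for `0 < B < A`, the discrete Picone inequality (`picone`)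

  `(A - B)^(p-1) |s|^p A^(1-p) ≤ |s - t|^p + (A - B)^(p-1) |t|^p B^(1-p)`.

It is applied with `A = ω(x)`, `B = ω(y)`, `s = u x`, `t = u y` on the shell
`{(x, y) | x ≠ 0, ‖x‖ < c ‖y‖}`, `c < 1`, multiplied by the kernel `‖x - y‖ ^ (-(n + a))`, and
integrated. By scaling and rotation invariance, the two terms in which only one of `u x`, `u y`
occurs are multiples of `H = ∫ |u|^p / ‖x‖^a` (`lintegral_outer`, `lintegral_inner`): in polar
coordinates around an axis the kernel integrates to `Φ`, and `r ↦ r⁻¹`, under which `Φ` transforms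
by a power of `r`, brings the outer integral back to `(0, c)`. With
`B(c) = ∫_0^c (1 - r^γ)^(p-1) r^(a-1+γ) Φ`, the outer coefficient is `A(c) = B(c) + C(c)` where
`C(c) = ∫_0^c (1 - r^γ)^p r^(a-1) Φ` increases to half of the sharp constant as `c → 1`.

For `c < 1` both `B(c)` and `H` are finite, so that `B(c) H` cancels and `C(c) H` is at most the
seminorm integral over the shell, hence at most half of the full seminorm, the integrand being
symmetric. This truncation replaces the principal value regularisation of the nonlocal Euler-Lagrange
equation. Strictness comes from the pairs with `u x ≠ 0` and `y` outside the support of `u`: there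
the Picone inequality has the explicit defect
`|u x|^p (1 - (1 - ω(y) / ω(x))^(p-1)) > 0`, which is kept as an additional summand (`gap`), over a
set which is independent of `c ≥ 1/2`; its integral is positive and survives the limit `c → 1`.

All integrals are Lebesgue integrals with values in `[0, ∞]`. The Bochner integrals in the sharp
constant enter only through the bound `ofReal (∫ f) ≤ ∫⁻ ofReal f`, which holds for every `f`.
-/

open MeasureTheory Filter

/-- Surface measure of the unit sphere `S^{m-1} ⊆ ℝ^m`. -/
noncomputable def sphereSurfaceArea (m : ℕ) : ℝ :=
  2 * Real.pi ^ ((m : ℝ) / 2) / Real.Gamma ((m : ℝ) / 2)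

/-- `Φ_{n,α,p}(r)` from the sharp fractional Hardy inequality. -/
noncomputable def Phi (n : ℕ) (α p r : ℝ) : ℝ :=
  sphereSurfaceArea (n - 1) *
    ∫ t in (-1 : ℝ)..1,
      (1 - t ^ 2) ^ (((n : ℝ) - 3) / 2) * (1 - 2 * r * t + r ^ 2) ^ (-(((n : ℝ) + p * α) / 2))

/-- The sharp fractional Hardy constant `C_{n,α,p}`. -/
noncomputable def hardyConst (n : ℕ) (α p : ℝ) : ℝ :=
  2 * ∫ r in (0 : ℝ)..1,
      r ^ (p * α - 1) * |1 - r ^ (((n : ℝ) - p * α) / p)| ^ p * Phi n α p r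

/-! ### Polar coordinates around an axis -/

section Aux

open Set
open scoped ENNReal

/-- Spherical coordinates for a radial function, with the explicit value of the sphere's area. -/
lemma lintegral_radial {m : ℕ} (hm : 1 ≤ m) (g : ℝ → ℝ≥0∞) (hg : Measurable g) :
    ∫⁻ z : EuclideanSpace ℝ (Fin m), g ‖z‖ =
      ENNReal.ofReal (sphereSurfaceArea m) *
        ∫⁻ r in Ioi (0 : ℝ), ENNReal.ofReal (r ^ (m - 1)) * g r := by
  have : Nonempty (Fin m) := ⟨⟨0, hm⟩⟩
  have : Nontrivial (EuclideanSpace ℝ (Fin m)) := inferInstance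
  set μ : Measure (EuclideanSpace ℝ (Fin m)) := volume
  have hdim : Module.finrank ℝ (EuclideanSpace ℝ (Fin m)) = m := by simp
  have hS : μ.toSphere univ = ENNReal.ofReal (sphereSurfaceArea m) := by
    rw [μ.toSphere_apply_univ, hdim, EuclideanSpace.volume_ball]
    have hm' : (0 : ℝ) < m := by exact_mod_cast hm
    rw [← ENNReal.ofReal_natCast, Fintype.card_fin, ENNReal.ofReal_one, one_pow, one_mul,
      ← ENNReal.ofReal_mul (by positivity)]
    congr 1
    rw [Real.Gamma_add_one (by positivity), sphereSurfaceArea, Real.sqrt_eq_rpow,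
      ← Real.rpow_natCast, ← Real.rpow_mul Real.pi_pos.le]
    have : Real.Gamma ((m : ℝ) / 2) ≠ 0 := (Real.Gamma_pos_of_pos (by positivity)).ne'
    rw [show (1 / 2 * (m : ℝ)) = m / 2 by ring]
    field_simp
  calc
    ∫⁻ z, g ‖z‖ ∂μ = ∫⁻ x : ({(0)}ᶜ : Set (EuclideanSpace ℝ (Fin m))), g (‖x.1‖)
        ∂(μ.comap (↑)) := by
      rw [lintegral_subtype_comap (measurableSet_singleton _).compl fun x ↦ g (‖x‖),
        restrict_compl_singleton]
    _ = ∫⁻ x, g x.2 ∂μ.toSphere.prod (.volumeIoiPow (m - 1)) := by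
      have := μ.measurePreserving_homeomorphUnitSphereProd.lintegral_comp_emb
        (Homeomorph.measurableEmbedding _) (g ∘ Subtype.val ∘ Prod.snd)
      rw [hdim] at this
      simpa using this
    _ = μ.toSphere univ * ∫⁻ x : Ioi (0 : ℝ), g x ∂.volumeIoiPow (m - 1) := by
      rw [lintegral_prod _ (by fun_prop)]
      simp [mul_comm]
    _ = _ := by
      rw [hS, Measure.volumeIoiPow, lintegral_withDensity_eq_lintegral_mul _ (by fun_prop)
        (by fun_prop), ← lintegral_subtype_comap measurableSet_Ioi]
      rfl

/-- Fubini for the first coordinate, for an integrand depending on the norm and on that coordinate. -/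
lemma lintegral_split (m : ℕ) (F : ℝ → ℝ → ℝ≥0∞) (hF : Measurable (Function.uncurry F)) :
    ∫⁻ z : EuclideanSpace ℝ (Fin (m + 1)), F ‖z‖ (z 0) =
      ∫⁻ s : ℝ, ∫⁻ w : EuclideanSpace ℝ (Fin m), F (√(s ^ 2 + ‖w‖ ^ 2)) s := by
  rw [← (PiLp.volume_preserving_toLp (Fin (m+1))).lintegral_comp_emb
    (MeasurableEquiv.toLp 2 _).measurableEmbedding,
   ← ((volume_preserving_piFinSuccAbove (fun _ : Fin (m + 1) => ℝ) 0).symm _).lintegral_comp_emb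
    (MeasurableEquiv.measurableEmbedding _)]
  rw [Measure.volume_eq_prod, lintegral_prod]
  · refine lintegral_congr fun s => ?_
    rw [← (PiLp.volume_preserving_toLp (Fin m)).lintegral_comp_emb
      (MeasurableEquiv.toLp 2 _).measurableEmbedding]
    refine lintegral_congr fun w => ?_
    simp [EuclideanSpace.norm_eq, Fin.sum_univ_succ, Real.sq_sqrt (Finset.sum_nonneg fun i _ => sq_nonneg (w i)), MeasurableEquiv.piFinSuccAbove, Fin.insertNthEquiv]
  · exact Measurable.aemeasurable (hF.comp (g := Function.uncurry F)
      (f := fun q : ℝ × (Fin m → ℝ) => (‖WithLp.toLp 2 ((MeasurableEquiv.piFinSuccAbove (fun _ : Fin (m + 1) => ℝ) 0).symm q)‖, ((MeasurableEquiv.piFinSuccAbove (fun _ : Fin (m + 1) => ℝ) 0).symm q) 0)) (by fun_prop))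

lemma lintegral_Ioi_scale {a : ℝ} (ha : 0 < a) (f : ℝ → ℝ≥0∞) :
    ∫⁻ r in Ioi (0 : ℝ), f r = ∫⁻ r in Ioi (0 : ℝ), ENNReal.ofReal a * f (a * r) := by
  have h := lintegral_image_eq_lintegral_abs_deriv_mul (s := Ioi (0 : ℝ)) (f := fun r => a * r)
    (f' := fun _ => a) measurableSet_Ioi
    (fun x _ => by simpa using ((hasDerivAt_id x).const_mul a).hasDerivWithinAt)
    (fun x _ y _ h => by simpa [ha.ne'] using h) f
  have himg : (fun r => a * r) '' Ioi (0 : ℝ) = Ioi 0 := by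
    rw [Set.image_mul_left_Ioi ha]; simp
  rw [himg, abs_of_pos ha] at h
  exact h

lemma lintegral_Ioi_inv (f : ℝ → ℝ≥0∞) :
    ∫⁻ r in Ioi (0 : ℝ), f r = ∫⁻ r in Ioi (0 : ℝ), ENNReal.ofReal ((r ^ 2)⁻¹) * f r⁻¹ := by
  have h := lintegral_image_eq_lintegral_abs_deriv_mul (s := Ioi (0 : ℝ)) (f := fun r => r⁻¹)
    (f' := fun r => -(r ^ 2)⁻¹) measurableSet_Ioi
    (fun x hx => (hasDerivAt_inv (ne_of_gt hx)).hasDerivWithinAt)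
    (fun x _ y _ h => by simpa using h) f
  have himg : (fun r => r⁻¹) '' Ioi (0 : ℝ) = Ioi 0 := by
    ext x
    refine ⟨?_, fun hx => ⟨x⁻¹, by simpa using hx, by simp⟩⟩
    rintro ⟨y, hy, rfl⟩
    simpa using hy
  rw [himg] at h
  simpa [abs_inv] using h

/-- Polar coordinates in the upper half plane, the angle being replaced by `t = cos θ`. -/
lemma lintegral_halfplane (G : ℝ → ℝ → ℝ≥0∞) (hG : Measurable (Function.uncurry G)) :
    ∫⁻ s : ℝ, ∫⁻ ρ in Ioi (0 : ℝ), G s ρ =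
      ∫⁻ r in Ioi (0 : ℝ), ∫⁻ t in Ioo (-1 : ℝ) 1,
        ENNReal.ofReal (r * (√(1 - t ^ 2))⁻¹) * G (r * t) (r * √(1 - t ^ 2)) := by
  have h1 : ∫⁻ s : ℝ, ∫⁻ ρ in Ioi (0 : ℝ), G s ρ =
      ∫⁻ q : ℝ × ℝ, (Ioi (0 : ℝ)).indicator (fun ρ => G q.1 ρ) q.2 := by
    rw [Measure.volume_eq_prod, lintegral_prod]
    · refine lintegral_congr fun s => ?_
      exact (lintegral_indicator measurableSet_Ioi _).symm
    · have : (fun q : ℝ × ℝ => (Ioi (0 : ℝ)).indicator (fun ρ => G q.1 ρ) q.2) =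
        (Prod.snd ⁻¹' Ioi (0 : ℝ)).indicator (Function.uncurry G) := by
        ext q; simp [indicator, Function.uncurry]
      rw [this]
      exact (hG.indicator (measurable_snd measurableSet_Ioi)).aemeasurable
  rw [h1, ← lintegral_comp_polarCoord_symm]
  rw [polarCoord_target, Measure.volume_eq_prod, ← Measure.prod_restrict, lintegral_prod]
  · refine setLIntegral_congr_fun measurableSet_Ioi fun r hr => ?_
    have hr' : (0 : ℝ) < r := hr
    have himg : Real.cos '' Ioo 0 Real.pi = Ioo (-1) 1 := by
      ext t
      constructor
      · rintro ⟨θ, hθ, rfl⟩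
        have hs := Real.sin_pos_of_pos_of_lt_pi hθ.1 hθ.2
        have := Real.sin_sq_add_cos_sq θ
        constructor <;> nlinarith
      · intro ht
        refine ⟨Real.arccos t, ⟨Real.arccos_pos.2 ht.2, ?_⟩, Real.cos_arccos ht.1.le ht.2.le⟩
        refine lt_of_le_of_ne (Real.arccos_le_pi t) fun h => ?_
        rw [Real.arccos_eq_pi] at h
        exact absurd ht.1 (not_lt.2 h)
    rw [← himg, lintegral_image_eq_lintegral_abs_deriv_mul (f' := fun θ => - Real.sin θ)
      measurableSet_Ioo (fun x _ => (Real.hasDerivAt_cos x).hasDerivWithinAt)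
      (Real.injOn_cos.mono Ioo_subset_Icc_self)]
    -- Only the angles in `(0, π)` contribute, and there `cos` is an injective change of variables.
    have hsub : Ioo 0 Real.pi ⊆ Ioo (-Real.pi) Real.pi :=
      Ioo_subset_Ioo_left (by linarith [Real.pi_pos])
    rw [← inter_eq_left.2 hsub, ← setLIntegral_indicator measurableSet_Ioo]
    refine setLIntegral_congr_fun measurableSet_Ioo fun θ hθ => ?_
    by_cases h0 : 0 < θ
    · have hs := Real.sin_pos_of_pos_of_lt_pi h0 hθ.2
      have hsq : √(1 - Real.cos θ ^ 2) = Real.sin θ := by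
        rw [← Real.sin_sq, Real.sqrt_sq hs.le]
      rw [indicator_of_mem (show θ ∈ Ioo 0 Real.pi from ⟨h0, hθ.2⟩)]
      simp only [polarCoord_symm_apply]
      rw [indicator_of_mem (show r * Real.sin θ ∈ Ioi 0 from mul_pos hr' hs), hsq, ← mul_assoc,
        ← ENNReal.ofReal_mul (abs_nonneg _), abs_neg, abs_of_pos hs, smul_eq_mul]
      congr 2
      field_simp
    · have hs : Real.sin θ ≤ 0 := Real.sin_nonpos_of_nonpos_of_neg_pi_le (not_lt.1 h0) hθ.1.le
      rw [indicator_of_notMem (show θ ∉ Ioo 0 Real.pi from fun h => h0 h.1)]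
      simp only [polarCoord_symm_apply]
      rw [indicator_of_notMem, smul_zero]
      exact not_lt.2 (mul_nonpos_of_nonneg_of_nonpos hr'.le hs)
  · refine Measurable.aemeasurable ?_
    refine Measurable.smul (f := fun q : ℝ × ℝ => ENNReal.ofReal q.1) (by fun_prop) ?_
    have : (fun q : ℝ × ℝ => (Ioi (0 : ℝ)).indicator (fun ρ => G (polarCoord.symm q).1 ρ)
        (polarCoord.symm q).2) =
        (Prod.snd ⁻¹' Ioi (0 : ℝ)).indicator (Function.uncurry G) ∘
          fun q : ℝ × ℝ => (q.1 * Real.cos q.2, q.1 * Real.sin q.2) := by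
      ext q; simp [indicator, Function.uncurry]
    rw [this]
    exact (hG.indicator (measurable_snd measurableSet_Ioi)).comp (by fun_prop)

/-- Polar coordinates for a function of `‖y‖` and of the component of `y` along a unit vector `e`:
rotate `e` to the first basis vector, use spherical coordinates in the orthogonal complement, and
then polar coordinates in the half plane of the axial and the radial coordinate. -/
lemma lintegral_axial {n : ℕ} (hn : 2 ≤ n) (e : EuclideanSpace ℝ (Fin n)) (he : ‖e‖ = 1)
    (F : ℝ → ℝ → ℝ≥0∞) (hF : Measurable (Function.uncurry F)) :
    ∫⁻ y : EuclideanSpace ℝ (Fin n), F ‖y‖ (inner ℝ e y) =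
      ENNReal.ofReal (sphereSurfaceArea (n - 1)) *
        ∫⁻ r in Ioi (0 : ℝ), ∫⁻ t in Ioo (-1 : ℝ) 1,
          ENNReal.ofReal (r ^ (n - 1) * (1 - t ^ 2) ^ (((n : ℝ) - 3) / 2)) * F r (r * t) := by
  obtain ⟨m, rfl⟩ : ∃ m, n = m + 1 := ⟨n - 1, by omega⟩
  have hm : 1 ≤ m := by omega
  obtain ⟨b, hb⟩ := Orthonormal.exists_orthonormalBasis_extension_of_card_eq
    (𝕜 := ℝ) (E := EuclideanSpace ℝ (Fin (m + 1))) (ι := Fin (m + 1)) (by simp) (v := fun _ => e)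
    (s := {0}) (by
      rw [orthonormal_subsingleton_iff]
      exact fun _ => he)
  have hb0 : b 0 = e := hb 0 rfl
  have h1 : ∫⁻ y : EuclideanSpace ℝ (Fin (m + 1)), F ‖y‖ (inner ℝ e y) =
      ∫⁻ z : EuclideanSpace ℝ (Fin (m + 1)), F ‖z‖ (z 0) := by
    rw [← b.measurePreserving_repr.lintegral_comp_emb
      b.repr.toHomeomorph.measurableEmbedding (fun z => F ‖z‖ (z 0))]
    refine lintegral_congr fun y => ?_
    rw [b.repr.norm_map, b.repr_apply_apply, hb0]
  have hmeas : Measurable (fun q : ℝ × ℝ => F (√(q.1 ^ 2 + q.2 ^ 2)) q.1) :=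
    hF.comp (g := Function.uncurry F) (f := fun q : ℝ × ℝ => (√(q.1 ^ 2 + q.2 ^ 2), q.1))
      (by fun_prop)
  rw [h1, lintegral_split m F hF]
  have h2 : ∀ s : ℝ, ∫⁻ w : EuclideanSpace ℝ (Fin m), F (√(s ^ 2 + ‖w‖ ^ 2)) s =
      ENNReal.ofReal (sphereSurfaceArea m) *
        ∫⁻ ρ in Ioi (0 : ℝ), ENNReal.ofReal (ρ ^ (m - 1)) * F (√(s ^ 2 + ρ ^ 2)) s := fun s =>
    lintegral_radial hm (fun ρ => F (√(s ^ 2 + ρ ^ 2)) s)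
      (hmeas.comp (measurable_const.prodMk measurable_id))
  simp_rw [h2]
  rw [lintegral_const_mul' _ _ ENNReal.ofReal_ne_top,
    lintegral_halfplane (fun s ρ => ENNReal.ofReal (ρ ^ (m - 1)) * F (√(s ^ 2 + ρ ^ 2)) s)
      (Measurable.mul (by fun_prop) hmeas)]
  congr 1
  refine setLIntegral_congr_fun measurableSet_Ioi fun r hr => ?_
  refine setLIntegral_congr_fun measurableSet_Ioo fun t ht => ?_
  have hr' : (0 : ℝ) < r := hr
  have ht' : 0 < 1 - t ^ 2 := by nlinarith [ht.1, ht.2]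
  have hq : 0 < √(1 - t ^ 2) := Real.sqrt_pos.2 ht'
  have e1 : √((r * t) ^ 2 + (r * √(1 - t ^ 2)) ^ 2) = r := by
    rw [mul_pow, mul_pow, Real.sq_sqrt ht'.le, ← mul_add, add_sub_cancel, mul_one,
      Real.sqrt_sq hr'.le]
  simp only [e1]
  rw [← mul_assoc, ← ENNReal.ofReal_mul (by positivity)]
  congr 2
  obtain ⟨k, rfl⟩ : ∃ k, m = k + 1 := ⟨m - 1, by omega⟩
  have e2 : (1 - t ^ 2) ^ ((((k + 1 + 1 : ℕ) : ℝ) - 3) / 2) = √(1 - t ^ 2) ^ k * (√(1 - t ^ 2))⁻¹ := by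
    rw [← Real.rpow_natCast (√(1 - t ^ 2)), ← Real.rpow_neg_one, ← Real.rpow_add hq, Real.sqrt_eq_rpow,
      ← Real.rpow_mul ht'.le]
    congr 1
    push_cast; ring
  rw [e2]
  simp only [Nat.add_sub_cancel]
  ring

/-! ### The function `Φ` and the constants -/

/-- No integrability is needed: the Bochner integral of a non-integrable function is `0`. -/
lemma ofReal_integral_le {β : Type*} [MeasurableSpace β] (μ : Measure β) (f : β → ℝ) :
    ENNReal.ofReal (∫ x, f x ∂μ) ≤ ∫⁻ x, ENNReal.ofReal (f x) ∂μ := by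
  by_cases hf : Integrable f μ
  · rw [integral_eq_lintegral_pos_part_sub_lintegral_neg_part hf]
    refine (ENNReal.ofReal_le_ofReal (sub_le_self _ ENNReal.toReal_nonneg)).trans ?_
    exact ENNReal.ofReal_toReal_le
  · simp [integral_undef hf]

lemma sphereSurfaceArea_nonneg (m : ℕ) : 0 ≤ sphereSurfaceArea m := by
  unfold sphereSurfaceArea
  have : 0 ≤ Real.Gamma ((m : ℝ) / 2) := Real.Gamma_nonneg_of_nonneg (by positivity)
  positivity

/-- The function `Φ` as a Lebesgue integral with values in `[0, ∞]`, in terms of the exponent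
`s = n + p α` of the kernel and for all real `r`. -/
noncomputable def PhiE (n : ℕ) (s r : ℝ) : ℝ≥0∞ :=
  ENNReal.ofReal (sphereSurfaceArea (n - 1)) *
    ∫⁻ t in Ioo (-1 : ℝ) 1, ENNReal.ofReal
      ((1 - t ^ 2) ^ (((n : ℝ) - 3) / 2) * (1 - 2 * r * t + r ^ 2) ^ (-(s / 2)))

lemma measurable_PhiE (n : ℕ) (s : ℝ) : Measurable (PhiE n s) := by
  unfold PhiE
  refine Measurable.const_mul ?_ _
  exact Measurable.lintegral_prod_right' (f := fun q : ℝ × ℝ => ENNReal.ofReal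
      ((1 - q.2 ^ 2) ^ (((n : ℝ) - 3) / 2) * (1 - 2 * q.1 * q.2 + q.1 ^ 2) ^ (-(s / 2))))
    (by fun_prop)

lemma ofReal_Phi_le (n : ℕ) (α p r : ℝ) :
    ENNReal.ofReal (Phi n α p r) ≤ PhiE n (n + p * α) r := by
  rw [Phi, PhiE, ENNReal.ofReal_mul (sphereSurfaceArea_nonneg _)]
  gcongr
  rw [intervalIntegral.integral_of_le (by norm_num), integral_Ioc_eq_integral_Ioo]
  exact ofReal_integral_le _ _

/-- Only this inequality between the real constant and its `[0, ∞]`-valued version is needed. The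
right-hand side is `2 * massC n (p * α) p γ 1`. -/
lemma ofReal_hardyConst_le (n : ℕ) (α p γ : ℝ) (hγ : 0 < γ) (h : γ = ((n : ℝ) - p * α) / p) :
    ENNReal.ofReal (hardyConst n α p) ≤ 2 * ∫⁻ r in Ioo (0 : ℝ) 1,
      ENNReal.ofReal ((1 - r ^ γ) ^ p * r ^ (p * α - 1)) * PhiE n (n + p * α) r := by
  rw [hardyConst, ENNReal.ofReal_mul (by norm_num), ENNReal.ofReal_ofNat]
  gcongr
  rw [intervalIntegral.integral_of_le (by norm_num), integral_Ioc_eq_integral_Ioo]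
  refine (ofReal_integral_le _ _).trans ?_
  refine setLIntegral_mono_ae' measurableSet_Ioo (Eventually.of_forall fun r hr => ?_)
  have h1 : 0 ≤ 1 - r ^ γ := sub_nonneg.2 (Real.rpow_le_one hr.1.le hr.2.le hγ.le)
  rw [← h, abs_of_nonneg h1, mul_comm (r ^ _), ENNReal.ofReal_mul
    (mul_nonneg (Real.rpow_nonneg h1 _) (Real.rpow_nonneg hr.1.le _))]
  gcongr
  exact ofReal_Phi_le n α p r

lemma one_sub_add_sq_pos {r t : ℝ} (ht : t ∈ Ioo (-1 : ℝ) 1) : 0 < 1 - 2 * r * t + r ^ 2 := by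
  nlinarith [ht.1, ht.2, sq_nonneg (r - t)]

/-- The inversion law which relates the two sides `‖y‖ < ‖x‖` and `‖y‖ > ‖x‖`. -/
lemma PhiE_inv (n : ℕ) (s : ℝ) {r : ℝ} (hr : 0 < r) :
    PhiE n s r⁻¹ = ENNReal.ofReal (r ^ s) * PhiE n s r := by
  rw [PhiE, PhiE, mul_left_comm, ← lintegral_const_mul' (ENNReal.ofReal (r ^ s)) _ ENNReal.ofReal_ne_top]
  congr 1
  refine setLIntegral_congr_fun measurableSet_Ioo fun t ht => ?_
  have hq := one_sub_add_sq_pos (r := r) ht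
  rw [← ENNReal.ofReal_mul (Real.rpow_nonneg hr.le s)]
  congr 1
  have : 1 - 2 * r⁻¹ * t + r⁻¹ ^ 2 = r ^ (-2 : ℝ) * (1 - 2 * r * t + r ^ 2) := by
    rw [Real.rpow_neg hr.le]
    norm_num
    field_simp
    ring
  rw [this, Real.mul_rpow (by positivity) hq.le, ← Real.rpow_mul hr.le]
  rw [show (-2 : ℝ) * -(s / 2) = s by ring]
  ring

/-- The integral of the kernel `‖x - y‖ ^ (-s)` against a function of `‖y‖ / ‖x‖`, by homogeneity and
polar coordinates around the axis through `x`. -/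
lemma lintegral_kernel {n : ℕ} (hn : 2 ≤ n) (s : ℝ) (g : ℝ → ℝ≥0∞) (hg : Measurable g)
    {x : EuclideanSpace ℝ (Fin n)} (hx : x ≠ 0) :
    ∫⁻ y, g (‖y‖ / ‖x‖) * ENNReal.ofReal (‖x - y‖ ^ (-s)) =
      ENNReal.ofReal (‖x‖ ^ ((n : ℝ) - s)) *
        ∫⁻ r in Ioi (0 : ℝ), g r * (ENNReal.ofReal (r ^ (n - 1)) * PhiE n s r) := by
  have ha : 0 < ‖x‖ := norm_pos_iff.2 hx
  set a := ‖x‖ with hadef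
  have key : ∀ y, g (‖y‖ / a) * ENNReal.ofReal (‖x - y‖ ^ (-s)) =
      (fun ρ q => g (ρ / a) * ENNReal.ofReal ((a ^ 2 - 2 * a * q + ρ ^ 2) ^ (-(s / 2)))) ‖y‖
        (inner ℝ (a⁻¹ • x) y) := by
    intro y
    simp only
    congr 2
    have : a ^ 2 - 2 * a * inner ℝ (a⁻¹ • x) y + ‖y‖ ^ 2 = ‖x - y‖ ^ (2 : ℝ) := by
      rw [Real.rpow_two, norm_sub_sq_real, inner_smul_left]
      simp only [conj_trivial]
      rw [hadef] at ha ⊢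
      field_simp
    rw [this, ← Real.rpow_mul (norm_nonneg _)]
    congr 1; ring
  have hunit : ‖a⁻¹ • x‖ = 1 := by
    rw [norm_smul, norm_inv, Real.norm_of_nonneg ha.le, ← hadef, inv_mul_cancel₀ ha.ne']
  rw [lintegral_congr key, lintegral_axial hn (a⁻¹ • x) hunit
      (fun ρ q => g (ρ / a) * ENNReal.ofReal ((a ^ 2 - 2 * a * q + ρ ^ 2) ^ (-(s / 2))))
      (Measurable.mul (hg.comp (by fun_prop)) (by fun_prop)),
    lintegral_Ioi_scale ha, ← lintegral_const_mul' _ _ ENNReal.ofReal_ne_top,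
    ← lintegral_const_mul' _ _ ENNReal.ofReal_ne_top]
  refine setLIntegral_congr_fun measurableSet_Ioi fun r hr => ?_
  have hr' : (0 : ℝ) < r := hr
  simp only [PhiE]
  have : ∀ t ∈ Ioo (-1 : ℝ) 1, ENNReal.ofReal ((a * r) ^ (n - 1) * (1 - t ^ 2) ^ (((n : ℝ) - 3) / 2)) *
      (g (a * r / a) * ENNReal.ofReal ((a ^ 2 - 2 * a * (a * r * t) + (a * r) ^ 2) ^ (-(s / 2)))) =
      (ENNReal.ofReal (a ^ ((n : ℝ) - 1 - s) * r ^ (n - 1)) * g r) * ENNReal.ofReal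
      ((1 - t ^ 2) ^ (((n : ℝ) - 3) / 2) * (1 - 2 * r * t + r ^ 2) ^ (-(s / 2))) := by
    intro t ht
    have hq := one_sub_add_sq_pos (r := r) ht
    have ht' : 0 < 1 - t ^ 2 := by nlinarith [ht.1, ht.2]
    rw [mul_div_cancel_left₀ _ ha.ne', mul_left_comm, ← ENNReal.ofReal_mul (by positivity),
      mul_right_comm (ENNReal.ofReal _) (g r), mul_comm (g r), ← ENNReal.ofReal_mul (by positivity)]
    congr 2
    have : a ^ 2 - 2 * a * (a * r * t) + (a * r) ^ 2 = a ^ (2 : ℝ) * (1 - 2 * r * t + r ^ 2) := by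
      rw [Real.rpow_two]; ring
    rw [this, Real.mul_rpow (by positivity) hq.le, ← Real.rpow_mul ha.le, mul_pow,
      ← Real.rpow_natCast a, Nat.cast_sub (by omega)]
    have : a ^ ((n : ℝ) - 1 - s) = a ^ ((n : ℝ) - (1 : ℕ)) * a ^ (2 * -(s / 2)) := by
      rw [← Real.rpow_add ha]; congr 1; push_cast; ring
    rw [this]
    ring
  have hgr : ENNReal.ofReal (a ^ ((n : ℝ) - s)) =
      ENNReal.ofReal a * ENNReal.ofReal (a ^ ((n : ℝ) - 1 - s)) := by
    rw [← ENNReal.ofReal_mul ha.le]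
    congr 1
    nth_rewrite 2 [← Real.rpow_one a]
    rw [← Real.rpow_add ha]
    congr 1; ring
  rw [setLIntegral_congr_fun measurableSet_Ioo this, hgr, lintegral_const_mul _ (by fun_prop),
    ENNReal.ofReal_mul (by positivity)]
  ring

/-! ### The weighted kernel integrals over the shells -/

/-- The coefficient `∫_0^c (1 - r^γ)^(p-1) r^(a-1+γ) Φ(r) dr` coming from the inner points
`‖y‖ < c ‖x‖`. -/
noncomputable def massB (n : ℕ) (a p γ c : ℝ) : ℝ≥0∞ :=
  ∫⁻ r in Ioo (0 : ℝ) c, ENNReal.ofReal ((1 - r ^ γ) ^ (p - 1) * r ^ (a - 1 + γ)) * PhiE n (n + a) r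

/-- The coefficient `∫_0^c (1 - r^γ)^(p-1) r^(a-1) Φ(r) dr` coming from the outer points
`‖x‖ < c ‖y‖`, after the substitution `r = ‖x‖ / ‖y‖`. -/
noncomputable def massA (n : ℕ) (a p γ c : ℝ) : ℝ≥0∞ :=
  ∫⁻ r in Ioo (0 : ℝ) c, ENNReal.ofReal ((1 - r ^ γ) ^ (p - 1) * r ^ (a - 1)) * PhiE n (n + a) r

/-- The truncation `∫_0^c (1 - r^γ)^p r^(a-1) Φ(r) dr` of half of the sharp Hardy constant. -/
noncomputable def massC (n : ℕ) (a p γ c : ℝ) : ℝ≥0∞ :=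
  ∫⁻ r in Ioo (0 : ℝ) c, ENNReal.ofReal ((1 - r ^ γ) ^ p * r ^ (a - 1)) * PhiE n (n + a) r

/-- This is `(1 - r^γ)^(p-1) = (1 - r^γ)^(p-1) r^γ + (1 - r^γ)^p` under the integral. -/
lemma massA_eq (n : ℕ) {a p γ c : ℝ} (hγ : 0 < γ) (hc : c ≤ 1) :
    massA n a p γ c = massB n a p γ c + massC n a p γ c := by
  have hm := measurable_PhiE n (n + a)
  rw [massA, massB, massC, ← lintegral_add_left (by fun_prop)]
  refine setLIntegral_congr_fun measurableSet_Ioo fun r hr => ?_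
  have h1 : 0 < 1 - r ^ γ := sub_pos.2 (Real.rpow_lt_one hr.1.le (hr.2.trans_le hc) hγ)
  have hr0 := hr.1
  rw [← add_mul, ← ENNReal.ofReal_add (by positivity) (by positivity)]
  congr 2
  have e1 : (1 - r ^ γ) ^ p = (1 - r ^ γ) ^ (p - 1) * (1 - r ^ γ) := by
    nth_rewrite 3 [← Real.rpow_one (1 - r ^ γ)]
    rw [← Real.rpow_add h1]; congr 1; ring
  rw [e1, Real.rpow_add hr0]
  ring

/-- Integral over the inner points `0 < ‖y‖ < c ‖x‖`. The point `y = 0`, where `‖y‖ ^ (-γ)` has the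
junk value `0`, is excluded. -/
lemma lintegral_inner {n : ℕ} (hn : 2 ≤ n) {a p γ c : ℝ} (hγ : 0 < γ) (hγp : γ * p = n - a)
    (hc : c ≤ 1) {x : EuclideanSpace ℝ (Fin n)} (hx : x ≠ 0) :
    ∫⁻ y, {y : EuclideanSpace ℝ (Fin n) | y ≠ 0 ∧ ‖y‖ < c * ‖x‖}.indicator (fun y =>
      ENNReal.ofReal ((‖y‖ ^ (-γ) - ‖x‖ ^ (-γ)) ^ (p - 1) * ‖x - y‖ ^ (-((n : ℝ) + a)))) y =
      ENNReal.ofReal (‖x‖ ^ (-γ * (p - 1) - a)) * massB n a p γ c := by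
  have ha : 0 < ‖x‖ := norm_pos_iff.2 hx
  set g : ℝ → ℝ≥0∞ := (Ioo 0 c).indicator fun r => ENNReal.ofReal (‖x‖ ^ (-γ * (p - 1)) *
    (r ^ (-γ) - 1) ^ (p - 1)) with hg
  have hgm : Measurable g := by
    rw [hg]; exact Measurable.indicator (by fun_prop) measurableSet_Ioo
  have key : ∀ y, {y : EuclideanSpace ℝ (Fin n) | y ≠ 0 ∧ ‖y‖ < c * ‖x‖}.indicator (fun y =>
      ENNReal.ofReal ((‖y‖ ^ (-γ) - ‖x‖ ^ (-γ)) ^ (p - 1) * ‖x - y‖ ^ (-((n : ℝ) + a)))) y =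
      g (‖y‖ / ‖x‖) * ENNReal.ofReal (‖x - y‖ ^ (-((n : ℝ) + a))) := by
    intro y
    have hiff : ‖y‖ / ‖x‖ ∈ Ioo 0 c ↔ y ≠ 0 ∧ ‖y‖ < c * ‖x‖ := by
      rw [mem_Ioo, div_pos_iff_of_pos_right ha, norm_pos_iff, div_lt_iff₀ ha]
    by_cases hy : y ≠ 0 ∧ ‖y‖ < c * ‖x‖
    · have hr := hiff.2 hy
      rw [indicator_of_mem (show y ∈ {y : EuclideanSpace ℝ (Fin n) | y ≠ 0 ∧ ‖y‖ < c * ‖x‖} from hy),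
        hg, indicator_of_mem hr]
      have h1 : 0 < (‖y‖ / ‖x‖) ^ (-γ) - 1 := sub_pos.2
        (Real.one_lt_rpow_of_pos_of_lt_one_of_neg hr.1 (hr.2.trans_le hc) (by linarith))
      have e1 : ‖y‖ ^ (-γ) - ‖x‖ ^ (-γ) = ‖x‖ ^ (-γ) * ((‖y‖ / ‖x‖) ^ (-γ) - 1) := by
        rw [Real.div_rpow (norm_nonneg _) ha.le]; field_simp
      rw [e1, Real.mul_rpow (by positivity) h1.le, ← Real.rpow_mul ha.le,
        ENNReal.ofReal_mul (by positivity)]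
    · rw [indicator_of_notMem (show y ∉ {y : EuclideanSpace ℝ (Fin n) | y ≠ 0 ∧ ‖y‖ < c * ‖x‖} from hy),
        hg, indicator_of_notMem (fun h => hy (hiff.1 h)), zero_mul]
  rw [lintegral_congr key, lintegral_kernel hn _ g hgm hx, massB]
  have e2 : ENNReal.ofReal (‖x‖ ^ (-γ * (p - 1) - a)) =
      ENNReal.ofReal (‖x‖ ^ ((n : ℝ) - (n + a))) * ENNReal.ofReal (‖x‖ ^ (-γ * (p - 1))) := by
    rw [← ENNReal.ofReal_mul (by positivity), ← Real.rpow_add ha]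
    congr 2; ring
  rw [e2, mul_assoc]
  congr 1
  rw [← lintegral_const_mul' _ _ ENNReal.ofReal_ne_top,
    ← inter_eq_left.2 (Ioo_subset_Ioi_self : Ioo 0 c ⊆ Ioi (0:ℝ)),
    ← setLIntegral_indicator measurableSet_Ioo]
  refine setLIntegral_congr_fun measurableSet_Ioi fun r hr => ?_
  simp only [hg]
  by_cases h : r ∈ Ioo 0 c
  · rw [indicator_of_mem h, indicator_of_mem h, ← mul_assoc, ← mul_assoc]
    have hr0 := h.1
    have h1 : 0 < 1 - r ^ γ := sub_pos.2 (Real.rpow_lt_one h.1.le (h.2.trans_le hc) hγ)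
    have e3 : r ^ (-γ) - 1 = r ^ (-γ) * (1 - r ^ γ) := by
      rw [mul_sub, ← Real.rpow_add hr0]; simp
    congr 1
    rw [e3, Real.mul_rpow (by positivity) h1.le, ← Real.rpow_mul hr0.le,
      ← ENNReal.ofReal_mul (by positivity), ← ENNReal.ofReal_mul (by positivity)]
    congr 1
    rw [← Real.rpow_natCast r, Nat.cast_sub (by omega)]
    have : r ^ (a - 1 + γ) = r ^ (-γ * (p - 1)) * r ^ ((n : ℝ) - (1 : ℕ)) := by
      rw [← Real.rpow_add hr0]; congr 1; push_cast; linarith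
    rw [this]; ring
  · rw [indicator_of_notMem h, indicator_of_notMem h, zero_mul]

/-- Integral over the outer points `‖x‖ < c ‖y‖`, turned into an integral over `(0, c)` by
`r ↦ r⁻¹` and the inversion law of `Φ`. -/
lemma lintegral_outer {n : ℕ} (hn : 2 ≤ n) {a p γ c : ℝ} (hγ : 0 < γ)
    (hc : c ≤ 1) {x : EuclideanSpace ℝ (Fin n)} (hx : x ≠ 0) :
    ∫⁻ y, {y : EuclideanSpace ℝ (Fin n) | ‖x‖ < c * ‖y‖}.indicator (fun y =>
      ENNReal.ofReal ((‖x‖ ^ (-γ) - ‖y‖ ^ (-γ)) ^ (p - 1) * ‖x - y‖ ^ (-((n : ℝ) + a)))) y =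
      ENNReal.ofReal (‖x‖ ^ (-γ * (p - 1) - a)) * massA n a p γ c := by
  have ha : 0 < ‖x‖ := norm_pos_iff.2 hx
  set g : ℝ → ℝ≥0∞ := {r : ℝ | 1 < c * r}.indicator fun r => ENNReal.ofReal (‖x‖ ^ (-γ * (p - 1)) *
    (1 - r ^ (-γ)) ^ (p - 1)) with hg
  have hgm : Measurable g := by
    rw [hg]; exact Measurable.indicator (by fun_prop) (measurableSet_lt (by fun_prop) (by fun_prop))
  have key : ∀ y, {y : EuclideanSpace ℝ (Fin n) | ‖x‖ < c * ‖y‖}.indicator (fun y =>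
      ENNReal.ofReal ((‖x‖ ^ (-γ) - ‖y‖ ^ (-γ)) ^ (p - 1) * ‖x - y‖ ^ (-((n : ℝ) + a)))) y =
      g (‖y‖ / ‖x‖) * ENNReal.ofReal (‖x - y‖ ^ (-((n : ℝ) + a))) := by
    intro y
    have hiff : ‖y‖ / ‖x‖ ∈ {r : ℝ | 1 < c * r} ↔ ‖x‖ < c * ‖y‖ := by
      rw [mem_ofPred_eq, ← mul_div_assoc, one_lt_div ha]
    by_cases hy : ‖x‖ < c * ‖y‖
    · have hr := hiff.2 hy
      rw [indicator_of_mem (show y ∈ {y : EuclideanSpace ℝ (Fin n) | ‖x‖ < c * ‖y‖} from hy),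
        hg, indicator_of_mem hr]
      have h0 : 1 < ‖y‖ / ‖x‖ := by
        rw [one_lt_div ha]
        exact hy.trans_le (mul_le_of_le_one_left (norm_nonneg _) hc)
      have h1 : 0 < 1 - (‖y‖ / ‖x‖) ^ (-γ) := sub_pos.2
        (Real.rpow_lt_one_of_one_lt_of_neg h0 (by linarith))
      have e1 : ‖x‖ ^ (-γ) - ‖y‖ ^ (-γ) = ‖x‖ ^ (-γ) * (1 - (‖y‖ / ‖x‖) ^ (-γ)) := by
        rw [Real.div_rpow (norm_nonneg _) ha.le]; field_simp
      rw [e1, Real.mul_rpow (by positivity) h1.le, ← Real.rpow_mul ha.le,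
        ENNReal.ofReal_mul (by positivity)]
    · rw [indicator_of_notMem (show y ∉ {y : EuclideanSpace ℝ (Fin n) | ‖x‖ < c * ‖y‖} from hy),
        hg, indicator_of_notMem (fun h => hy (hiff.1 h)), zero_mul]
  rw [lintegral_congr key, lintegral_kernel hn _ g hgm hx, massA, lintegral_Ioi_inv]
  have e2 : ENNReal.ofReal (‖x‖ ^ (-γ * (p - 1) - a)) =
      ENNReal.ofReal (‖x‖ ^ ((n : ℝ) - (n + a))) * ENNReal.ofReal (‖x‖ ^ (-γ * (p - 1))) := by
    rw [← ENNReal.ofReal_mul (by positivity), ← Real.rpow_add ha]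
    congr 2; ring
  rw [e2, mul_assoc]
  congr 1
  rw [← lintegral_const_mul' _ _ ENNReal.ofReal_ne_top,
    ← inter_eq_left.2 (Ioo_subset_Ioi_self : Ioo 0 c ⊆ Ioi (0:ℝ)),
    ← setLIntegral_indicator measurableSet_Ioo]
  refine setLIntegral_congr_fun measurableSet_Ioi fun r hr => ?_
  have hr0 : (0 : ℝ) < r := hr
  simp only [hg]
  have hiff : r⁻¹ ∈ {r : ℝ | 1 < c * r} ↔ r ∈ Ioo 0 c := by
    rw [mem_ofPred_eq, ← div_eq_mul_inv, one_lt_div hr0, mem_Ioo]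
    exact ⟨fun h => ⟨hr0, h⟩, fun h => h.2⟩
  by_cases h : r ∈ Ioo 0 c
  · rw [indicator_of_mem (hiff.2 h), indicator_of_mem h, PhiE_inv n _ hr0, ← mul_assoc,
      ← mul_assoc, ← mul_assoc, ← mul_assoc]
    have h1 : 0 < 1 - r ^ γ := sub_pos.2 (Real.rpow_lt_one h.1.le (h.2.trans_le hc) hγ)
    congr 1
    rw [Real.inv_rpow hr0.le, Real.rpow_neg hr0.le, inv_inv, ← ENNReal.ofReal_mul (by positivity),
      ← ENNReal.ofReal_mul (by positivity), ← ENNReal.ofReal_mul (by positivity),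
      ← ENNReal.ofReal_mul (by positivity)]
    congr 1
    rw [inv_pow, ← Real.rpow_natCast r (n - 1), Nat.cast_sub (by omega), ← Real.rpow_neg hr0.le]
    have : r ^ (a - 1) = (r ^ 2)⁻¹ * r ^ (-((n : ℝ) - (1 : ℕ))) * r ^ ((n : ℝ) + a) := by
      rw [← Real.rpow_two, ← Real.rpow_neg hr0.le, ← Real.rpow_add hr0, ← Real.rpow_add hr0]
      congr 1; push_cast; ring
    rw [this]; ring
  · rw [indicator_of_notMem (fun h' => h (hiff.1 h')), indicator_of_notMem h, zero_mul, mul_zero]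

lemma lintegral_ball_norm_rpow_lt_top {n : ℕ} (hn : 2 ≤ n) {q : ℝ} (hq : q < n) (R C : ℝ) :
    ∫⁻ y in Metric.ball (0 : EuclideanSpace ℝ (Fin n)) R, ENNReal.ofReal (C * ‖y‖ ^ (-q)) < ∞ := by
  have h := integrableOn_ball_of_norm_le_rpow (μ := (volume : Measure (EuclideanSpace ℝ (Fin n))))
    (f := fun y => C * ‖y‖ ^ (-q)) (C := |C|) (α := q) (r := R) (by simp; omega) (by simpa using hq)
    (Eventually.of_forall fun x => by
      rw [norm_mul, Real.norm_eq_abs, Real.norm_of_nonneg (by positivity)])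
    (Measurable.aestronglyMeasurable (by fun_prop))
  exact h.lintegral_lt_top

/-- By `lintegral_inner` at a unit vector `e`, `massB` is an integral over the ball of radius `c < 1`,
where the kernel is bounded by `(1 - c) ^ (-(n + a))` and the weight by the integrable function
`‖y‖ ^ (-γ (p - 1))`, as `γ (p - 1) < γ p < n`. -/
lemma massB_lt_top {n : ℕ} (hn : 2 ≤ n) {a p γ c : ℝ} (ha : 0 < a) (hp : 1 < p)
    (hγ : 0 < γ) (hγp : γ * p = n - a) (hc : c < 1) : massB n a p γ c < ∞ := by
  have : Nontrivial (EuclideanSpace ℝ (Fin n)) := by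
    have : Nonempty (Fin n) := ⟨⟨0, by omega⟩⟩
    infer_instance
  obtain ⟨e, he⟩ := exists_norm_eq (EuclideanSpace ℝ (Fin n)) (c := 1) zero_le_one
  have he0 : e ≠ 0 := by rintro rfl; simp at he
  have h := lintegral_inner hn (a := a) hγ hγp hc.le he0
  rw [he, Real.one_rpow, Real.one_rpow, ENNReal.ofReal_one, one_mul] at h
  rw [← h]
  refine lt_of_le_of_lt ?_ (lintegral_ball_norm_rpow_lt_top hn (q := γ * (p - 1)) (by nlinarith) 1
    ((1 - c) ^ (-((n : ℝ) + a))))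
  rw [← lintegral_indicator measurableSet_ball]
  refine lintegral_mono fun y => ?_
  by_cases hy : y ≠ 0 ∧ ‖y‖ < c * 1
  · rw [indicator_of_mem (show y ∈ {y : EuclideanSpace ℝ (Fin n) | y ≠ 0 ∧ ‖y‖ < c * 1} from hy),
      indicator_of_mem (by rw [mem_ball_zero_iff]; linarith)]
    apply ENNReal.ofReal_le_ofReal
    have hy0 : 0 < ‖y‖ := norm_pos_iff.2 hy.1
    have h1 : 1 ≤ ‖y‖ ^ (-γ) :=
      Real.one_le_rpow_of_pos_of_le_one_of_nonpos hy0 (by linarith) (by linarith)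
    rw [mul_comm]
    have h2 : 1 - c ≤ ‖e - y‖ := by
      have := norm_sub_norm_le e y
      linarith
    gcongr ?_ * ?_
    · exact Real.rpow_le_rpow_of_nonpos (by linarith) h2 (by linarith [(Nat.cast_nonneg n : (0:ℝ) ≤ n)])
    · rw [show -(γ * (p - 1)) = -γ * (p - 1) by ring, Real.rpow_mul hy0.le]
      exact Real.rpow_le_rpow (by linarith) (by linarith) (by linarith)
  · rw [indicator_of_notMem (show y ∉ {y : EuclideanSpace ℝ (Fin n) | y ≠ 0 ∧ ‖y‖ < c * 1} from hy)]
    exact zero_le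

lemma iSup_massC (n : ℕ) (a p γ : ℝ) (c : ℕ → ℝ) (hc : Monotone c)
    (hlim : Tendsto c atTop (nhds 1)) :
    massC n a p γ 1 = ⨆ k, massC n a p γ (c k) := by
  unfold massC
  rw [← setLIntegral_iUnion_of_directed]
  · congr 2
    ext r
    simp only [mem_Ioo, mem_iUnion]
    constructor
    · rintro ⟨h0, h1⟩
      obtain ⟨k, hk⟩ := (hlim.eventually (lt_mem_nhds h1)).exists
      exact ⟨k, h0, hk⟩
    · rintro ⟨k, h0, hk⟩
      exact ⟨h0, hk.trans_le (hc.ge_of_tendsto hlim k)⟩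
  · exact directed_of_isDirected_le fun i j h => Ioo_subset_Ioo_right (hc h)

/-! ### The pointwise inequality -/

/-- The discrete Picone inequality. It is convexity of `t ↦ t ^ p` at the points `|a - b| / (A - B)`
and `|b| / B` with weights `(A - B) / A` and `B / A`, whose combination is at least `|a| / A`. -/
lemma picone {p A B : ℝ} (hp : 1 < p) (hB : 0 < B) (hAB : B < A) (a b : ℝ) :
    (A - B) ^ (p - 1) * (|a| ^ p * A ^ (-(p - 1))) ≤
      |a - b| ^ p + (A - B) ^ (p - 1) * (|b| ^ p * B ^ (-(p - 1))) := by
  have hA : 0 < A := hB.trans hAB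
  have hd : 0 < A - B := sub_pos.2 hAB
  have hconv := (convexOn_rpow hp.le).2
    (show |a - b| / (A - B) ∈ Ici (0 : ℝ) from div_nonneg (abs_nonneg _) hd.le)
    (show |b| / B ∈ Ici (0 : ℝ) from div_nonneg (abs_nonneg _) hB.le)
    (show 0 ≤ (A - B) / A by positivity) (show 0 ≤ B / A by positivity) (by field_simp; ring)
  simp only [smul_eq_mul] at hconv
  have htri : |a| / A ≤ (A - B) / A * (|a - b| / (A - B)) + B / A * (|b| / B) := by
    have : |a| ≤ |a - b| + |b| := by simpa using abs_add_le (a - b) b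
    have e : (A - B) / A * (|a - b| / (A - B)) + B / A * (|b| / B) = (|a - b| + |b|) / A := by
      field_simp
    rw [e]; gcongr
  have h1 := (Real.rpow_le_rpow (by positivity) htri (by linarith : 0 ≤ p)).trans hconv
  rw [Real.div_rpow (abs_nonneg _) hA.le, Real.div_rpow (abs_nonneg _) hd.le,
    Real.div_rpow (abs_nonneg _) hB.le] at h1
  have e : ∀ {z : ℝ}, 0 < z → z ^ p = z ^ (p - 1) * z := fun {z} hz => by
    nth_rewrite 3 [← Real.rpow_one z]
    rw [← Real.rpow_add hz]; congr 1; ring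
  rw [e hA, e hd, e hB] at h1
  rw [Real.rpow_neg hA.le, Real.rpow_neg hB.le]
  have hA1 : 0 < A ^ (p - 1) := by positivity
  have hB1 : 0 < B ^ (p - 1) := by positivity
  have hd1 : 0 < (A - B) ^ (p - 1) := by positivity
  have h2 := mul_le_mul_of_nonneg_left h1 (mul_pos hd1 hA).le
  have l : (A - B) ^ (p - 1) * A * (|a| ^ p / (A ^ (p - 1) * A)) =
      (A - B) ^ (p - 1) * (|a| ^ p * (A ^ (p - 1))⁻¹) := by field_simp
  have r : (A - B) ^ (p - 1) * A * ((A - B) / A * (|a - b| ^ p / ((A - B) ^ (p - 1) * (A - B))) +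
      B / A * (|b| ^ p / (B ^ (p - 1) * B))) =
      |a - b| ^ p + (A - B) ^ (p - 1) * (|b| ^ p * (B ^ (p - 1))⁻¹) := by field_simp
  rwa [l, r] at h2

section Shells

variable {n : ℕ}

/-- The pairs `(x, y)` with `x ≠ 0` and `‖x‖ < c ‖y‖`. For `c < 1` they stay away from the
diagonal in the sense of ratios. -/
def shell (n : ℕ) (c : ℝ) : Set (EuclideanSpace ℝ (Fin n) × EuclideanSpace ℝ (Fin n)) :=
  {q | q.1 ≠ 0 ∧ ‖q.1‖ < c * ‖q.2‖}

lemma isOpen_shell (n : ℕ) (c : ℝ) : IsOpen (shell n c) := by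
  have h : IsOpen {q : EuclideanSpace ℝ (Fin n) × EuclideanSpace ℝ (Fin n) |
      ‖q.1‖ < c * ‖q.2‖} := isOpen_lt (by fun_prop) (by fun_prop)
  exact (isOpen_ne.preimage continuous_fst).inter h

/-- The coefficient `(ω(x) - ω(y))^(p-1) ‖x - y‖^(-(n + a))` with `ω(x) = ‖x‖ ^ (-γ)`. -/
noncomputable def weight (n : ℕ) (a p γ : ℝ)
    (q : EuclideanSpace ℝ (Fin n) × EuclideanSpace ℝ (Fin n)) : ℝ≥0∞ :=
  ENNReal.ofReal ((‖q.1‖ ^ (-γ) - ‖q.2‖ ^ (-γ)) ^ (p - 1) * ‖q.1 - q.2‖ ^ (-((n : ℝ) + a)))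

/-- The density `|u|^p ω^(1-p)` with `ω(x) = ‖x‖ ^ (-γ)`. -/
noncomputable def picDens (p γ : ℝ) (u : EuclideanSpace ℝ (Fin n) → ℝ)
    (x : EuclideanSpace ℝ (Fin n)) : ℝ≥0∞ :=
  ENNReal.ofReal (|u x| ^ p * ‖x‖ ^ (γ * (p - 1)))

/-- The integrand of the Gagliardo seminorm, with `a = p α`. -/
noncomputable def gag (a p : ℝ) (u : EuclideanSpace ℝ (Fin n) → ℝ)
    (q : EuclideanSpace ℝ (Fin n) × EuclideanSpace ℝ (Fin n)) : ℝ≥0∞ :=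
  ENNReal.ofReal (|u q.1 - u q.2| ^ p / ‖q.1 - q.2‖ ^ ((n : ℝ) + a))

/-- A set on which the Picone inequality has an explicit positive defect, when `u` vanishes outside
the ball of radius `R`: here `u x ≠ 0` and `u y = 0`. It lies in every shell with `c ≥ 1 / 2`. -/
def gapSet (u : EuclideanSpace ℝ (Fin n) → ℝ) (R : ℝ) :
    Set (EuclideanSpace ℝ (Fin n) × EuclideanSpace ℝ (Fin n)) :=
  {q | u q.1 ≠ 0 ∧ R < ‖q.2‖} ∩ shell n (1 / 2)

/-- The defect in the Picone inequality for `u y = 0`, times the kernel: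
`|u x|^p (1 - (1 - ω(y) / ω(x))^(p-1)) ‖x - y‖^(-(n + a))`. -/
noncomputable def gap (a p γ : ℝ) (u : EuclideanSpace ℝ (Fin n) → ℝ)
    (q : EuclideanSpace ℝ (Fin n) × EuclideanSpace ℝ (Fin n)) : ℝ≥0∞ :=
  ENNReal.ofReal (|u q.1| ^ p * (1 - (1 - ‖q.2‖ ^ (-γ) * ‖q.1‖ ^ γ) ^ (p - 1)) *
    ‖q.1 - q.2‖ ^ (-((n : ℝ) + a)))

/-- The elementary positivity facts on a shell. -/
lemma rpow_neg_lt {γ c : ℝ} (hγ : 0 < γ) (hc : c ≤ 1)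
    {q : EuclideanSpace ℝ (Fin n) × EuclideanSpace ℝ (Fin n)} (hq : q ∈ shell n c) :
    0 < ‖q.1‖ ∧ ‖q.1‖ < ‖q.2‖ ∧ 0 < ‖q.2‖ ^ (-γ) ∧ ‖q.2‖ ^ (-γ) < ‖q.1‖ ^ (-γ) ∧
      0 < ‖q.1 - q.2‖ := by
  have h1 : 0 < ‖q.1‖ := norm_pos_iff.2 hq.1
  have h2 : ‖q.1‖ < ‖q.2‖ := hq.2.trans_le (mul_le_of_le_one_left (norm_nonneg _) hc)
  have h3 : 0 < ‖q.2‖ := h1.trans h2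
  refine ⟨h1, h2, by positivity, Real.rpow_lt_rpow_of_neg h1 h2 (by linarith), ?_⟩
  rw [norm_pos_iff, sub_ne_zero]
  rintro h
  rw [h] at h2
  exact lt_irrefl _ h2

/-- The Picone inequality for `ω = ‖·‖ ^ (-γ)` on a shell, improved by the defect on `gapSet`, where
the two sides are in fact equal. -/
lemma gag_ge {a p γ c : ℝ} (hp : 1 < p) (hγ : 0 < γ) (hc : c ≤ 1)
    {u : EuclideanSpace ℝ (Fin n) → ℝ} {R : ℝ} (hR : ∀ y, R < ‖y‖ → u y = 0)
    {q : EuclideanSpace ℝ (Fin n) × EuclideanSpace ℝ (Fin n)} (hq : q ∈ shell n c) :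
    picDens p γ u q.1 * weight n a p γ q + (gapSet u R).indicator (gap a p γ u) q ≤
      gag a p u q + picDens p γ u q.2 * weight n a p γ q := by
  obtain ⟨hx, hxy, hB, hAB, hk⟩ := rpow_neg_lt hγ hc hq
  have hy := hx.trans hxy
  set A := ‖q.1‖ ^ (-γ) with hA
  set B := ‖q.2‖ ^ (-γ) with hBd
  have hd : 0 < A - B := sub_pos.2 hAB
  have eA : ‖q.1‖ ^ (γ * (p - 1)) = A ^ (-(p - 1)) := by
    rw [hA, ← Real.rpow_mul hx.le]; congr 1; ring
  have eB : ‖q.2‖ ^ (γ * (p - 1)) = B ^ (-(p - 1)) := by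
    rw [hBd, ← Real.rpow_mul hy.le]; congr 1; ring
  have eG : |u q.1 - u q.2| ^ p / ‖q.1 - q.2‖ ^ ((n : ℝ) + a) =
      |u q.1 - u q.2| ^ p * ‖q.1 - q.2‖ ^ (-((n : ℝ) + a)) := by
    rw [Real.rpow_neg hk.le]; rfl
  have hA0 : 0 < A := hB.trans hAB
  simp only [picDens, weight, gag, eA, eB, eG, ← hA, ← hBd]
  set k := ‖q.1 - q.2‖ ^ (-((n : ℝ) + a)) with hkd
  have hk0 : 0 < k := by positivity
  rw [← ENNReal.ofReal_mul (by positivity), ← ENNReal.ofReal_mul (by positivity),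
    ← ENNReal.ofReal_add (by positivity) (by positivity)]
  by_cases hg : q ∈ gapSet u R
  · rw [indicator_of_mem hg, gap, ← hkd, ← hBd]
    have hu : u q.2 = 0 := hR _ hg.1.2
    have e1 : ‖q.1‖ ^ γ = A⁻¹ := by rw [hA, Real.rpow_neg hx.le, inv_inv]
    have e2 : 1 - B * A⁻¹ = (A - B) * A⁻¹ := by field_simp
    have e3 : ((A - B) * A⁻¹) ^ (p - 1) = (A - B) ^ (p - 1) * A ^ (-(p - 1)) := by
      rw [Real.mul_rpow hd.le (by positivity), Real.inv_rpow hA0.le, Real.rpow_neg hA0.le]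
    have h1 : ((A - B) * A⁻¹) ^ (p - 1) ≤ 1 := by
      refine Real.rpow_le_one (by positivity) ?_ (by linarith)
      rw [← e2]
      have : 0 < B * A⁻¹ := by positivity
      linarith
    rw [hu, e1, e2, ← ENNReal.ofReal_add (by positivity)
      (mul_nonneg (mul_nonneg (by positivity) (sub_nonneg.2 h1)) hk0.le)]
    apply ENNReal.ofReal_le_ofReal
    rw [e3, abs_zero, Real.zero_rpow (by linarith), sub_zero]
    apply le_of_eq
    ring
  · rw [indicator_of_notMem hg, add_zero]
    apply ENNReal.ofReal_le_ofReal
    have := mul_le_mul_of_nonneg_right (picone hp hB hAB (u q.1) (u q.2)) hk0.le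
    nlinarith [this]

/-! ### Integration over the shells -/

lemma lintegral_picDens_fst (hn : 2 ≤ n) {a p γ c : ℝ} (hγ : 0 < γ) (hc : c ≤ 1)
    {u : EuclideanSpace ℝ (Fin n) → ℝ} (hu : Measurable u) :
    ∫⁻ q, (shell n c).indicator (fun q => picDens p γ u q.1 * weight n a p γ q) q =
      massA n a p γ c * ∫⁻ x, ENNReal.ofReal (|u x| ^ p / ‖x‖ ^ a) := by
  rw [Measure.volume_eq_prod, lintegral_prod _ (Measurable.aemeasurable (Measurable.indicator
    (by unfold picDens weight; fun_prop) (isOpen_shell n c).measurableSet)),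
    ← lintegral_const_mul _ (by fun_prop)]
  have : Nonempty (Fin n) := ⟨⟨0, by omega⟩⟩
  have : Nontrivial (EuclideanSpace ℝ (Fin n)) := inferInstance
  -- The identity of the inner integrals is only available for `x ≠ 0`, that is, almost everywhere.
  refine lintegral_congr_ae ?_
  filter_upwards [compl_mem_ae_iff.2 (measure_singleton (0 : EuclideanSpace ℝ (Fin n)))] with x hx
  have hx : x ≠ 0 := hx
  have hx0 : 0 < ‖x‖ := norm_pos_iff.2 hx
  have key : ∀ y, (shell n c).indicator (fun q => picDens p γ u q.1 * weight n a p γ q) (x, y) =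
      picDens p γ u x * {y : EuclideanSpace ℝ (Fin n) | ‖x‖ < c * ‖y‖}.indicator (fun y =>
      ENNReal.ofReal ((‖x‖ ^ (-γ) - ‖y‖ ^ (-γ)) ^ (p - 1) * ‖x - y‖ ^ (-((n : ℝ) + a)))) y := by
    intro y
    simp [indicator, shell, weight, hx]
  rw [lintegral_congr key, lintegral_const_mul' (picDens p γ u x) _ ENNReal.ofReal_ne_top,
    lintegral_outer hn hγ hc hx, picDens, ← mul_assoc, ← ENNReal.ofReal_mul (by positivity), mul_comm]
  congr 2
  rw [mul_assoc, ← Real.rpow_add hx0, div_eq_mul_inv, ← Real.rpow_neg hx0.le]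
  congr 2; ring

lemma lintegral_picDens_snd (hn : 2 ≤ n) {a p γ c : ℝ} (hγ : 0 < γ) (hγp : γ * p = n - a)
    (hc : c ≤ 1) {u : EuclideanSpace ℝ (Fin n) → ℝ} (hu : Measurable u) :
    ∫⁻ q, (shell n c).indicator (fun q => picDens p γ u q.2 * weight n a p γ q) q =
      massB n a p γ c * ∫⁻ x, ENNReal.ofReal (|u x| ^ p / ‖x‖ ^ a) := by
  rw [Measure.volume_eq_prod, lintegral_prod_symm _ (Measurable.aemeasurable (Measurable.indicator
    (by unfold picDens weight; fun_prop) (isOpen_shell n c).measurableSet)),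
    ← lintegral_const_mul _ (by fun_prop)]
  have : Nonempty (Fin n) := ⟨⟨0, by omega⟩⟩
  have : Nontrivial (EuclideanSpace ℝ (Fin n)) := inferInstance
  -- The identity of the inner integrals is only available for `x ≠ 0`, that is, almost everywhere.
  refine lintegral_congr_ae ?_
  filter_upwards [compl_mem_ae_iff.2 (measure_singleton (0 : EuclideanSpace ℝ (Fin n)))] with x hx
  have hx : x ≠ 0 := hx
  have hx0 : 0 < ‖x‖ := norm_pos_iff.2 hx
  have key : ∀ y, (shell n c).indicator (fun q => picDens p γ u q.2 * weight n a p γ q) (y, x) =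
      picDens p γ u x * {y : EuclideanSpace ℝ (Fin n) | y ≠ 0 ∧ ‖y‖ < c * ‖x‖}.indicator (fun y =>
      ENNReal.ofReal ((‖y‖ ^ (-γ) - ‖x‖ ^ (-γ)) ^ (p - 1) * ‖x - y‖ ^ (-((n : ℝ) + a)))) y := by
    intro y
    simp [indicator, shell, weight, norm_sub_rev x y]
  rw [lintegral_congr key, lintegral_const_mul' (picDens p γ u x) _ ENNReal.ofReal_ne_top,
    lintegral_inner hn hγ hγp hc hx, picDens, ← mul_assoc, ← ENNReal.ofReal_mul (by positivity),
    mul_comm]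
  congr 2
  rw [mul_assoc, ← Real.rpow_add hx0, div_eq_mul_inv, ← Real.rpow_neg hx0.le]
  congr 2; ring

/-- A shell and its image under `(x, y) ↦ (y, x)` are disjoint, and the integrand is symmetric. -/
lemma two_mul_lintegral_shell_le {a p c : ℝ} (hc : c ≤ 1)
    {u : EuclideanSpace ℝ (Fin n) → ℝ} (hu : Measurable u) :
    2 * ∫⁻ q, (shell n c).indicator (gag a p u) q ≤ ∫⁻ q, gag a p u q := by
  have hm : Measurable ((shell n c).indicator (gag a p u)) :=
    Measurable.indicator (by unfold gag; fun_prop) (isOpen_shell n c).measurableSet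
  have hswap : ∫⁻ q, (shell n c).indicator (gag a p u) q =
      ∫⁻ q : EuclideanSpace ℝ (Fin n) × EuclideanSpace ℝ (Fin n),
        (shell n c).indicator (gag a p u) q.swap := by
    rw [Measure.volume_eq_prod, lintegral_prod_swap]
  rw [two_mul]
  nth_rewrite 2 [hswap]
  rw [← lintegral_add_left hm]
  refine lintegral_mono fun q => ?_
  have hsym : gag a p u q.swap = gag a p u q := by
    simp only [gag, Prod.fst_swap, Prod.snd_swap]
    rw [abs_sub_comm, norm_sub_rev]
  by_cases h : q ∈ shell n c
  · have h' : q.swap ∉ shell n c := fun h' =>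
      lt_asymm (rpow_neg_lt one_pos hc h).2.1 (rpow_neg_lt one_pos hc h').2.1
    rw [indicator_of_mem h, indicator_of_notMem h', add_zero]
  · rw [indicator_of_notMem h, zero_add]
    by_cases h' : q.swap ∈ shell n c
    · rw [indicator_of_mem h', hsym]
    · rw [indicator_of_notMem h']; exact zero_le

/-- `gapSet u R` is open and nonempty, and `gap` is positive on it. -/
lemma lintegral_gap_ne_zero (hn : 2 ≤ n) {a p γ R : ℝ} (hp : 1 < p) (hγ : 0 < γ)
    {u : EuclideanSpace ℝ (Fin n) → ℝ} (hu : Continuous u) (hne : u ≠ 0) :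
    ∫⁻ q, (gapSet u R).indicator (gap a p γ u) q ≠ 0 := by
  have : Nontrivial (EuclideanSpace ℝ (Fin n)) := by
    have : Nonempty (Fin n) := ⟨⟨0, by omega⟩⟩
    infer_instance
  have hopen : IsOpen (gapSet u R) := by
    have h : IsOpen {q : EuclideanSpace ℝ (Fin n) × EuclideanSpace ℝ (Fin n) | R < ‖q.2‖} :=
      isOpen_lt (by fun_prop) (by fun_prop)
    exact ((isOpen_ne.preimage (hu.comp continuous_fst)).inter h).inter (isOpen_shell n _)
  have hnonempty : (gapSet u R).Nonempty := by
    obtain ⟨x₀, hx₀⟩ := Function.ne_iff.1 hne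
    obtain ⟨x, hx, hx0⟩ := (dense_compl_singleton (0 : EuclideanSpace ℝ (Fin n))).inter_open_nonempty
      {x | u x ≠ 0} (isOpen_ne.preimage hu) ⟨x₀, hx₀⟩
    obtain ⟨y, hy⟩ := exists_norm_eq (EuclideanSpace ℝ (Fin n)) (c := |R| + 2 * ‖x‖ + 1)
      (by positivity)
    have := le_abs_self R
    have := abs_nonneg R
    have := norm_nonneg x
    refine ⟨(x, y), ⟨hx, ?_⟩, hx0, ?_⟩ <;> simp only [hy] <;> linarith
  intro h0
  rw [lintegral_eq_zero_iff (Measurable.indicator (by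
    have := hu.measurable
    unfold gap; fun_prop) hopen.measurableSet)] at h0
  refine (hopen.measure_pos volume hnonempty).ne' (measure_mono_null (fun q hq => ?_) h0)
  rw [mem_compl_iff, mem_ofPred_eq, indicator_of_mem hq]
  refine (ENNReal.ofReal_pos.2 ?_).ne'
  obtain ⟨hx, hxy, hB, hAB, hk⟩ := rpow_neg_lt hγ (by norm_num) hq.2
  have e1 : ‖q.1‖ ^ γ = (‖q.1‖ ^ (-γ))⁻¹ := by rw [Real.rpow_neg hx.le, inv_inv]
  have hA0 := hB.trans hAB
  have h1 : ‖q.2‖ ^ (-γ) * ‖q.1‖ ^ γ < 1 := by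
    rw [e1, ← div_eq_mul_inv, div_lt_one hA0]; exact hAB
  have h2 : 0 < ‖q.2‖ ^ (-γ) * ‖q.1‖ ^ γ := by positivity
  have h3 : (1 - ‖q.2‖ ^ (-γ) * ‖q.1‖ ^ γ) ^ (p - 1) < 1 :=
    Real.rpow_lt_one (by linarith) (by linarith) (by linarith)
  have h4 : 0 < |u q.1| := abs_pos.2 hq.1.1
  exact mul_pos (mul_pos (by positivity) (sub_pos.2 h3)) (by positivity)

lemma hardy_integral_lt_top (hn : 2 ≤ n) {a p : ℝ} (ha : a < n) (hp : 1 < p)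
    {u : EuclideanSpace ℝ (Fin n) → ℝ} {C R : ℝ} (hC : ∀ x, ‖u x‖ ≤ C)
    (hR : ∀ y, R ≤ ‖y‖ → u y = 0) :
    ∫⁻ x, ENNReal.ofReal (|u x| ^ p / ‖x‖ ^ a) < ∞ := by
  refine lt_of_le_of_lt ?_ (lintegral_ball_norm_rpow_lt_top hn ha R (C ^ p))
  rw [← lintegral_indicator measurableSet_ball]
  refine lintegral_mono fun x => ?_
  by_cases hx : x ∈ Metric.ball 0 R
  · rw [indicator_of_mem hx, Real.rpow_neg (norm_nonneg _), ← div_eq_mul_inv]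
    apply ENNReal.ofReal_le_ofReal
    have := hC x
    rw [Real.norm_eq_abs] at this
    gcongr
  · have : u x = 0 := hR x (by simpa using hx)
    simp [this, Real.zero_rpow (by linarith : p ≠ 0)]

/-- The improved Hardy inequality with the truncated constant, obtained by integrating `gag_ge` and
cancelling the finite quantity `massB * H`. -/
lemma shell_ineq (hn : 2 ≤ n) {a p γ c R : ℝ} (ha : 0 < a) (hp : 1 < p) (hγ : 0 < γ)
    (hγp : γ * p = n - a) (hc : c < 1) (hc2 : 1 / 2 ≤ c)
    {u : EuclideanSpace ℝ (Fin n) → ℝ} (hu : Continuous u) (hR : ∀ y, R < ‖y‖ → u y = 0)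
    (hH : ∫⁻ x, ENNReal.ofReal (|u x| ^ p / ‖x‖ ^ a) < ∞) :
    2 * (massC n a p γ c * (∫⁻ x, ENNReal.ofReal (|u x| ^ p / ‖x‖ ^ a)) +
      ∫⁻ q, (gapSet u R).indicator (gap a p γ u) q) ≤ ∫⁻ q, gag a p u q := by
  refine le_trans ?_ (two_mul_lintegral_shell_le (n := n) (a := a) (p := p) hc.le hu.measurable)
  gcongr
  have hum := hu.measurable
  have hS := (isOpen_shell n c).measurableSet
  have hsub : gapSet u R ⊆ shell n c := fun q hq =>
    ⟨hq.2.1, hq.2.2.trans_le (mul_le_mul_of_nonneg_right hc2 (norm_nonneg _))⟩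
  have hpt : ∀ q, (shell n c).indicator (fun q => picDens p γ u q.1 * weight n a p γ q) q +
      (gapSet u R).indicator (gap a p γ u) q ≤ (shell n c).indicator (gag a p u) q +
      (shell n c).indicator (fun q => picDens p γ u q.2 * weight n a p γ q) q := by
    intro q
    by_cases hq : q ∈ shell n c
    · rw [indicator_of_mem hq, indicator_of_mem hq, indicator_of_mem hq]
      exact gag_ge hp hγ hc.le hR hq
    · rw [indicator_of_notMem hq, indicator_of_notMem (fun h => hq (hsub h))]
      simp
  -- The integrated inequality is `(B + C) H + δ ≤ shell energy + B H`, with `B = massB`, `C = massC`.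
  have hInt := lintegral_mono (μ := volume) hpt
  rw [lintegral_add_left (Measurable.indicator (by unfold picDens weight; fun_prop) hS),
    lintegral_add_right _ (Measurable.indicator (by unfold picDens weight; fun_prop) hS),
    lintegral_picDens_fst hn hγ hc.le hum, lintegral_picDens_snd hn hγ hγp hc.le hum,
    massA_eq n hγ hc.le, add_mul, add_assoc, add_comm] at hInt
  have hfin := (ENNReal.mul_lt_top (massB_lt_top hn ha hp hγ hγp hc) hH).ne
  exact (ENNReal.add_le_add_iff_right hfin).1 hInt

end Shells

end Aux

/-! ### Conclusion -/

/-- For `p > 1` the sharp fractional Hardy inequality is strict for every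
nonzero `u ∈ C_c^∞(ℝⁿ)`. -/
theorem fractional_hardy_inequality_strict (n : ℕ) (hn : 2 ≤ n) (α p : ℝ)
    (hα : α ∈ Set.Ioo (0 : ℝ) 1) (hp : 1 < p) (hpn : p < n / α)
    (u : EuclideanSpace ℝ (Fin n) → ℝ) (hu : ContDiff ℝ (⊤ : ℕ∞) u) (hsupp : HasCompactSupport u)
    (hne : u ≠ 0) :
    ENNReal.ofReal (hardyConst n α p) *
        ∫⁻ x, ENNReal.ofReal (|u x| ^ p / ‖x‖ ^ (p * α)) <
      ∫⁻ x, ∫⁻ y, ENNReal.ofReal (|u x - u y| ^ p / ‖x - y‖ ^ ((n : ℝ) + p * α)) := by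
  have hα0 := hα.1
  have hp0 : 0 < p := by linarith
  have ha : 0 < p * α := by positivity
  have han : p * α < n := by rwa [lt_div_iff₀ hα0] at hpn
  obtain ⟨γ, hγd⟩ : ∃ γ, γ = ((n : ℝ) - p * α) / p := ⟨_, rfl⟩
  have hγ : 0 < γ := by rw [hγd]; exact div_pos (sub_pos.2 han) hp0
  have hγp : γ * p = n - p * α := by rw [hγd]; field_simp
  have hcont := hu.continuous
  obtain ⟨C, hC⟩ := hsupp.exists_bound_of_continuous hcont
  obtain ⟨R, -, hR⟩ := hsupp.isCompact.isBounded.subset_ball_lt 0 0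
  have hR' : ∀ y, R ≤ ‖y‖ → u y = 0 := fun y hy => by
    refine image_eq_zero_of_notMem_tsupport fun h => ?_
    have := mem_ball_zero_iff.1 (hR h)
    linarith
  have hH := hardy_integral_lt_top hn han hp hC hR'
  have hδ := lintegral_gap_ne_zero (a := p * α) (R := R) hn hp hγ hcont hne
  set H := ∫⁻ x, ENNReal.ofReal (|u x| ^ p / ‖x‖ ^ (p * α)) with hHd
  set δ := ∫⁻ q, (gapSet u R).indicator (gap (p * α) p γ u) q with hδd
  have hE : ∫⁻ x, ∫⁻ y, ENNReal.ofReal (|u x - u y| ^ p / ‖x - y‖ ^ ((n : ℝ) + p * α)) =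
      ∫⁻ q, gag (p * α) p u q := by
    have := hcont.measurable
    rw [Measure.volume_eq_prod, lintegral_prod _ (by unfold gag; fun_prop)]
    rfl
  rw [hE]
  -- Shell ratios increasing to `1`, all at least `1 / 2` so that the shells contain `gapSet u R`.
  set c : ℕ → ℝ := fun k => 1 - 1 / (k + 2 : ℝ) with hcd
  have hc1 : ∀ k, c k < 1 := fun k => by
    have : (0 : ℝ) < 1 / (k + 2) := by positivity
    simp only [hcd]; linarith
  have hc2 : ∀ k, 1 / 2 ≤ c k := fun k => by
    have : 1 / (k + 2 : ℝ) ≤ 1 / 2 := by gcongr; linarith [(Nat.cast_nonneg k : (0 : ℝ) ≤ k)]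
    simp only [hcd]; linarith
  have hcm : Monotone c := fun i j hij => by
    simp only [hcd]
    gcongr
  have hclim : Tendsto c atTop (nhds 1) := by
    have := (tendsto_one_div_add_atTop_nhds_zero_nat (𝕜 := ℝ)).comp (tendsto_add_atTop_nat 1)
    have h2 := this.const_sub 1
    rw [sub_zero] at h2
    refine h2.congr fun k => ?_
    simp only [hcd, Function.comp]
    push_cast
    congr 2; ring
  have hmain : 2 * (massC n (p * α) p γ 1 * H + δ) ≤ ∫⁻ q, gag (p * α) p u q := by
    rw [iSup_massC n (p * α) p γ c hcm hclim, ENNReal.iSup_mul, ENNReal.iSup_add, ENNReal.mul_iSup]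
    exact iSup_le fun k => shell_ineq hn ha hp hγ hγp (hc1 k) (hc2 k) hcont
      (fun y hy => hR' y hy.le) hH
  have hconst : ENNReal.ofReal (hardyConst n α p) * H ≤ 2 * (massC n (p * α) p γ 1 * H) := by
    rw [← mul_assoc]
    gcongr
    exact ofReal_hardyConst_le n α p γ hγ hγd
  refine lt_of_lt_of_le ?_ hmain
  rw [mul_add]
  refine lt_of_lt_of_le ?_ (add_le_add_left hconst (2 * δ))
  exact ENNReal.lt_add_right (ENNReal.mul_lt_top ENNReal.ofReal_lt_top hH).ne
    (mul_ne_zero two_ne_zero hδ)
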